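/- arXiv:2307.15561 — 8 statements merged into one kernel-verified Lean document; each statement's English description precedes it below -/
import Mathlib

section
/- For all parameters α_w, α_n ∈ (0,1) with α_w < α_n, every number of parties n and every weight function w : {1,…,n} → ℝ≥0 with total weight W > 0, there exists a ticket assignment t : {1,…,n} → ℕ satisfying the Weight Restriction condition with parameters (α_w, α_n) whose total number of tickets T satisfies T ≤ ⌈(α_w(1 − α_w)/(α_n − α_w)) · n⌉. -/
theorem wr_aux (n : ℕ) (w : Fin n → ℝ) (hw : ∀ i, 0 ≤ w i) (hW : 0 < ∑ i, w i)
    (c : ℝ) (hc0 : 0 < c) (hc1 : c < 1) (T : ℕ) :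
    ∃ (t : Fin n → ℕ) (s : ℝ), 0 ≤ s ∧ (∑ i, t i = T) ∧
      ∀ i, s * w i + c - 1 ≤ t i ∧ (t i : ℝ) ≤ s * w i + c := by
  induction T with
  | zero =>
    refine ⟨fun _ => 0, 0, le_refl _, by simp, fun i => ⟨?_, ?_⟩⟩ <;> push_cast <;> linarith
  | succ T ih =>
    obtain ⟨t, s, hs, hT, ht⟩ := ih
    have hne : (Finset.univ.filter (fun i => 0 < w i)).Nonempty := by
      obtain ⟨i, _, hi⟩ := Finset.exists_lt_of_sum_lt (s := Finset.univ) (f := fun _ : Fin n => (0:ℝ))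
        (g := w) (by simpa using hW)
      exact ⟨i, by simpa using hi⟩
    obtain ⟨i, hi, hmin⟩ := Finset.exists_min_image _ (fun i => ((t i : ℝ) + 1 - c) / w i) hne
    simp only [Finset.mem_filter, Finset.mem_univ, true_and] at hi hmin
    set s' := ((t i : ℝ) + 1 - c) / w i with hs'
    have e : s' * w i = (t i : ℝ) + 1 - c := by rw [hs']; field_simp
    have hss : s ≤ s' := by
      rw [hs', le_div_iff₀ hi]; linarith [(ht i).1]
    refine ⟨fun j => t j + if j = i then 1 else 0, s', hs.trans hss, ?_, ?_⟩
    · rw [Finset.sum_add_distrib, hT]; simp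
    · intro j
      by_cases hj : j = i
      · subst hj
        simp only [if_true]; push_cast
        constructor <;> linarith
      · simp only [hj, if_false, add_zero]
        have h2 : s * w j ≤ s' * w j := mul_le_mul_of_nonneg_right hss (hw j)
        refine ⟨?_, by linarith [(ht j).2]⟩
        rcases (hw j).lt_or_eq with h | h
        · have := hmin j h
          rw [le_div_iff₀ h] at this
          linarith
        · have := (ht j).1
          rw [← h] at this ⊢
          linarith

/-- **Weight Restriction upper bound.** For all `αw, αn ∈ (0,1)` with `αw < αn`,
every `n` and weights `w` with positive total weight, there is a ticket
assignment `t` satisfying the Weight Restriction condition with parameters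
`(αw, αn)` whose total number of tickets is at most
`⌈(αw (1 - αw) / (αn - αw)) * n⌉`. -/
theorem weight_restriction_upper_bound
    (αw αn : ℝ) (hαw0 : 0 < αw) (hαw1 : αw < 1)
    (hαn0 : 0 < αn) (hαn1 : αn < 1) (hlt : αw < αn)
    (n : ℕ) (w : Fin n → ℝ) (hw : ∀ i, 0 ≤ w i)
    (hW : 0 < ∑ i, w i) :
    ∃ t : Fin n → ℕ,
      (∀ S : Finset (Fin n),
          (∑ i ∈ S, w i) < αw * (∑ i, w i) →
          ((∑ i ∈ S, t i : ℕ) : ℝ) < αn * ((∑ i, t i : ℕ) : ℝ)) ∧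
      ((∑ i, t i : ℕ) : ℤ) ≤ ⌈(αw * (1 - αw) / (αn - αw)) * n⌉ := by
  have hn : 0 < n := by
    rcases Nat.eq_zero_or_pos n with h | h
    · subst h; simp at hW
    · exact h
  have hn' : (0:ℝ) < n := by exact_mod_cast hn
  set B : ℝ := (αw * (1 - αw) / (αn - αw)) * n with hB
  have hd : 0 < αn - αw := by linarith
  have h1 : 0 < 1 - αw := by linarith
  have hBpos : 0 < B := by positivity
  have hBd : B * (αn - αw) = αw * (1 - αw) * n := by rw [hB]; field_simp
  obtain ⟨t, s, hs, hT, ht⟩ := wr_aux n w hw hW αw hαw0 hαw1 ⌈B⌉₊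
  have hTB : B ≤ ((∑ i, t i : ℕ) : ℝ) := by rw [hT]; exact Nat.le_ceil B
  refine ⟨t, ?_, ?_⟩
  · intro S hS
    have hspos : 0 < s := by
      rcases hs.lt_or_eq with h | h
      · exact h
      · exfalso
        have h0 : ∀ i, t i = 0 := by
          intro i
          have := (ht i).2
          rw [← h] at this
          have h3 : (t i : ℝ) < 1 := by linarith
          have h4 : t i < 1 := by exact_mod_cast h3
          omega
        simp [h0] at hTB
        linarith
    have hsplit : (∑ i, t i : ℕ) = ∑ i ∈ S, t i + ∑ i ∈ Sᶜ, t i := (Finset.sum_add_sum_compl S t).symm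
    have hwsplit : ∑ i, w i = ∑ i ∈ S, w i + ∑ i ∈ Sᶜ, w i := (Finset.sum_add_sum_compl S w).symm
    have hcard : (S.card : ℝ) + (Sᶜ.card : ℝ) = n := by
      have := Finset.card_add_card_compl S
      rw [Fintype.card_fin] at this
      exact_mod_cast this
    have hU : ((∑ i ∈ S, t i : ℕ) : ℝ) ≤ s * (∑ i ∈ S, w i) + αw * S.card := by
      push_cast
      calc _ ≤ ∑ i ∈ S, (s * w i + αw) := Finset.sum_le_sum fun i _ => (ht i).2
        _ = _ := by rw [Finset.sum_add_distrib, ← Finset.mul_sum]; simp [mul_comm]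
    have hL : s * (∑ i ∈ Sᶜ, w i) - (1 - αw) * Sᶜ.card ≤ ((∑ i ∈ Sᶜ, t i : ℕ) : ℝ) := by
      push_cast
      calc _ = ∑ i ∈ Sᶜ, (s * w i - (1 - αw)) := by
            rw [Finset.sum_sub_distrib, ← Finset.mul_sum, Finset.sum_const, nsmul_eq_mul]; ring
        _ ≤ _ := Finset.sum_le_sum fun i _ => by linarith [(ht i).1]
    have hTs : ((∑ i, t i : ℕ) : ℝ) = ((∑ i ∈ S, t i : ℕ) : ℝ) + ((∑ i ∈ Sᶜ, t i : ℕ) : ℝ) := by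
      rw [hsplit, Nat.cast_add]
    have hk := mul_le_mul_of_nonneg_right hTB hd.le
    rw [hBd, ← hcard] at hk
    rw [hwsplit] at hS
    have hS' := mul_lt_mul_of_pos_left hS hspos
    have hU' := mul_le_mul_of_nonneg_left hU h1.le
    have hL' := mul_le_mul_of_nonneg_left hL hαw0.le
    rw [hTs] at hk ⊢
    nlinarith
  · rw [hT, Int.natCast_ceil_eq_ceil hBpos.le]
end

section
/- For all parameters β_w, β_n ∈ (0,1) with β_n < β_w, every number of parties n and every weight function w : {1,…,n} → ℝ≥0 with total weight W > 0, there exists a ticket assignment t : {1,…,n} → ℕ satisfying the Weight Qualification condition with parameters (β_w, β_n) whose total number of tickets T satisfies T ≤ ⌈(β_w(1 − β_w)/(β_w − β_n)) · n⌉. -/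
theorem rounding_aux (c : ℝ) (hc0 : 0 < c) (hc1 : c < 1)
    (n : ℕ) (w : Fin n → ℝ) (hw : ∀ i, 0 ≤ w i) (hW : 0 < ∑ i, w i) (T : ℕ) :
    ∃ (t : Fin n → ℕ) (s : ℝ), (∑ i, t i = T) ∧ 0 ≤ s ∧ (0 < T → 0 < s) ∧
      ∀ i, s * w i + c - 1 ≤ t i ∧ (t i : ℝ) ≤ s * w i + c := by
  induction T with
  | zero =>
    refine ⟨fun _ => 0, 0, by simp, le_refl _, by simp, fun i => ?_⟩
    constructor <;> simp <;> linarith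
  | succ T ih =>
    obtain ⟨t, s, hsum, hs, -, hb⟩ := ih
    have hne : (Finset.univ.filter (fun i => 0 < w i)).Nonempty := by
      obtain ⟨i, -, hi⟩ := Finset.exists_lt_of_sum_lt (s := Finset.univ) (f := fun _ : Fin n => (0:ℝ))
        (g := w) (by simpa using hW)
      exact ⟨i, by simpa using hi⟩
    obtain ⟨j, hj, hmin⟩ := Finset.exists_min_image _
      (fun i => ((t i : ℝ) + 1 - c) / w i) hne
    simp only [Finset.mem_filter, Finset.mem_univ, true_and] at hj hmin
    obtain ⟨s', hs'⟩ : ∃ s', s' = ((t j : ℝ) + 1 - c) / w j := ⟨_, rfl⟩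
    have hjeq : s' * w j = (t j : ℝ) + 1 - c := by
      rw [hs']; field_simp
    have htn : ∀ i, (0:ℝ) ≤ t i := fun i => Nat.cast_nonneg _
    have hs'0 : 0 < s' := by
      rw [hs']
      have := htn j
      apply div_pos _ hj
      linarith
    have hss : s ≤ s' := by
      rw [hs', le_div_iff₀ hj]
      linarith [(hb j).1]
    have hup : ∀ i, s' * w i ≤ (t i : ℝ) + 1 - c := by
      intro i
      rcases (hw i).eq_or_lt with h | h
      · rw [← h]; have := htn i; linarith
      · have := hmin i h
        rw [← hs', le_div_iff₀ h] at this
        exact this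
    refine ⟨fun i => t i + if i = j then 1 else 0, s', ?_, hs'0.le, fun _ => hs'0, fun i => ?_⟩
    · rw [Finset.sum_add_distrib, hsum]; simp
    · have h1 := hup i
      have h2 := (hb i).2
      have h3 := mul_le_mul_of_nonneg_right hss (hw i)
      by_cases h : i = j
      · subst h
        simp only [if_true]
        push_cast
        constructor <;> linarith
      · simp only [h, if_false]
        push_cast
        constructor <;> linarith

/-- **Weight Qualification upper bound.** For all `βw, βn ∈ (0,1)` with
`βn < βw`, every `n` and weights `w` with positive total weight, there is a
ticket assignment `t` satisfying the Weight Qualification condition with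
parameters `(βw, βn)` whose total number of tickets is at most
`⌈(βw (1 - βw) / (βw - βn)) * n⌉`. -/
theorem weight_qualification_upper_bound
    (βw βn : ℝ) (hβw0 : 0 < βw) (hβw1 : βw < 1)
    (hβn0 : 0 < βn) (hβn1 : βn < 1) (hlt : βn < βw)
    (n : ℕ) (w : Fin n → ℝ) (hw : ∀ i, 0 ≤ w i)
    (hW : 0 < ∑ i, w i) :
    ∃ t : Fin n → ℕ,
      (∀ S : Finset (Fin n),
          (∑ i ∈ S, w i) > βw * (∑ i, w i) →
          ((∑ i ∈ S, t i : ℕ) : ℝ) > βn * ((∑ i, t i : ℕ) : ℝ)) ∧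
      ((∑ i, t i : ℕ) : ℤ) ≤ ⌈(βw * (1 - βw) / (βw - βn)) * n⌉ := by
  have hd : 0 < βw - βn := by linarith
  have hn : 0 < n := by
    rcases Nat.eq_zero_or_pos n with h | h
    · subst h; simp at hW
    · exact h
  have hnR : (0:ℝ) < n := by exact_mod_cast hn
  have hq : 0 < (βw * (1 - βw) / (βw - βn)) * n :=
    mul_pos (div_pos (mul_pos hβw0 (by linarith)) hd) hnR
  have hcpos : 0 < ⌈(βw * (1 - βw) / (βw - βn)) * n⌉ := Int.ceil_pos.mpr hq
  obtain ⟨T, hT⟩ := Int.eq_ofNat_of_zero_le hcpos.le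
  have hTpos : 0 < T := by omega
  obtain ⟨t, s, hsum, -, hs, hb⟩ := rounding_aux (1 - βw) (by linarith) (by linarith) n w hw hW T
  have hs := hs hTpos
  refine ⟨t, ?_, by rw [hsum, hT]⟩
  intro S hS
  have hTge : βw * (1 - βw) * n ≤ (βw - βn) * T := by
    have h := Int.le_ceil ((βw * (1 - βw) / (βw - βn)) * n)
    rw [hT] at h
    have h' : (βw * (1 - βw) / (βw - βn)) * n ≤ (T : ℝ) := by simpa using h
    have := mul_le_mul_of_nonneg_left h' hd.le
    calc _ = (βw - βn) * ((βw * (1 - βw) / (βw - βn)) * n) := by field_simp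
      _ ≤ _ := this
  have hSl : s * (∑ i ∈ S, w i) - βw * S.card ≤ ∑ i ∈ S, (t i : ℝ) := by
    have : ∑ i ∈ S, (s * w i - βw) ≤ ∑ i ∈ S, (t i : ℝ) :=
      Finset.sum_le_sum fun i _ => by linarith [(hb i).1]
    rw [Finset.sum_sub_distrib, ← Finset.mul_sum] at this
    simp only [Finset.sum_const, nsmul_eq_mul] at this
    linarith
  have hRl : ∑ i ∈ Sᶜ, (t i : ℝ) ≤ s * (∑ i ∈ Sᶜ, w i) + (1 - βw) * (Sᶜ).card := by
    have : ∑ i ∈ Sᶜ, (t i : ℝ) ≤ ∑ i ∈ Sᶜ, (s * w i + (1 - βw)) :=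
      Finset.sum_le_sum fun i _ => by linarith [(hb i).2]
    rw [Finset.sum_add_distrib, ← Finset.mul_sum] at this
    simp only [Finset.sum_const, nsmul_eq_mul] at this
    linarith
  have hc : (S.card : ℝ) + (Sᶜ).card = n := by
    have := Finset.card_add_card_compl S
    rw [Fintype.card_fin] at this
    exact_mod_cast this
  have hw2 := Finset.sum_add_sum_compl S w
  have ht2 := Finset.sum_add_sum_compl S (fun i => (t i : ℝ))
  have hsumR : ∑ i, (t i : ℝ) = T := by exact_mod_cast hsum
  rw [hsumR] at ht2
  rw [hsum]
  push_cast
  have e1 := mul_le_mul_of_nonneg_left hSl (by linarith : (0:ℝ) ≤ 1 - βw)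
  have e2 := mul_le_mul_of_nonneg_left hRl hβw0.le
  have e3 := mul_lt_mul_of_pos_left hS hs
  generalize ∑ i ∈ S, (t i : ℝ) = a at *
  generalize ∑ i ∈ Sᶜ, (t i : ℝ) = b at *
  generalize ∑ i ∈ S, w i = x at *
  generalize ∑ i ∈ Sᶜ, w i = y at *
  rw [← hw2] at e3
  rw [← hc] at hTge
  rw [← ht2] at hTge ⊢
  nlinarith
end

section
/- Let α_w, α_n ∈ (0,1) with α_w < α_n, let w : {1,…,n} → ℝ≥0 be weights with total weight W > 0, let s > 0 be a real number, and let t : {1,…,n} → ℕ be a ticket assignment with total T such that w i·s + α_w − 1 ≤ t i ≤ w i·s + α_w for every i. If t violates the Weight Restriction condition with parameters (α_w, α_n), i.e., there exists a subset S ⊆ {1,…,n} with w(S) < α_w·W and t(S) ≥ α_n·T, then T < (α_w(1 − α_w)/(α_n − α_w)) · n. -/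
/-- If a ticket assignment of the form `w i · s + αw − 1 ≤ t i ≤ w i · s + αw`
violates the Weight Restriction condition with parameters `(αw, αn)`, then its
total number of tickets is less than `(αw (1 - αw)/(αn - αw)) * n`. -/
theorem invalid_assignment_few_tickets
    (αw αn : ℝ) (hαw0 : 0 < αw) (hαw1 : αw < 1)
    (hαn0 : 0 < αn) (hαn1 : αn < 1) (hlt : αw < αn)
    (n : ℕ) (w : Fin n → ℝ) (hw : ∀ i, 0 ≤ w i)
    (hW : 0 < ∑ i, w i)
    (s : ℝ) (hs : 0 < s)
    (t : Fin n → ℕ)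
    (ht : ∀ i, w i * s + αw - 1 ≤ (t i : ℝ) ∧ (t i : ℝ) ≤ w i * s + αw)
    (S : Finset (Fin n))
    (hSw : (∑ i ∈ S, w i) < αw * (∑ i, w i))
    (hSt : ((∑ i ∈ S, t i : ℕ) : ℝ) ≥ αn * ((∑ i, t i : ℕ) : ℝ)) :
    ((∑ i, t i : ℕ) : ℝ) < (αw * (1 - αw) / (αn - αw)) * n := by
  push_cast at hSt ⊢
  have key : ∑ i, ((if i ∈ S then (t i : ℝ) else 0) - αw * t i)
      ≤ ∑ i : Fin n, (s * ((if i ∈ S then w i else 0) - αw * w i) + αw * (1 - αw)) := by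
    apply Finset.sum_le_sum
    intro i _
    obtain ⟨h1, h2⟩ := ht i
    split_ifs
    · have := mul_le_mul_of_nonneg_left h2 (sub_pos.2 hαw1).le
      nlinarith
    · have := mul_le_mul_of_nonneg_left h1 hαw0.le
      nlinarith
  rw [Finset.sum_add_distrib, ← Finset.mul_sum, Finset.sum_sub_distrib, Finset.sum_sub_distrib,
    ← Finset.mul_sum, ← Finset.mul_sum, Finset.sum_ite_mem, Finset.sum_ite_mem,
    Finset.univ_inter, Finset.sum_const, Finset.card_univ, Fintype.card_fin, nsmul_eq_mul] at key
  have hneg := mul_pos hs (sub_pos.2 hSw)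
  rw [div_mul_eq_mul_div, lt_div_iff₀ (sub_pos.2 hlt)]
  nlinarith
end

section
/- Let α_w, α_n ∈ (0,1) with α_w < α_n, let w : {1,…,n} → ℝ≥0 be weights with total weight W > 0, let s > 0 be a real number, and let t : {1,…,n} → ℕ be a ticket assignment with total T such that w i·s + α_w − 1 ≤ t i ≤ w i·s + α_w for every i. If there exists a subset S ⊆ {1,…,n} with w(S) < α_w·W and t(S) ≥ α_n·T, then s < (α_n(1 − α_w)·n)/((α_n − α_w)·W) − |S|/W, where |S| denotes the cardinality of S. -/
/-- If a ticket assignment of the form `w i · s + αw − 1 ≤ t i ≤ w i · s + αw`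
violates the Weight Restriction condition with parameters `(αw, αn)` at a
subset `S`, then `s < (αn (1 - αw) n)/((αn - αw) W) - |S|/W`. -/
theorem invalid_assignment_scale_bound
    (αw αn : ℝ) (hαw0 : 0 < αw) (hαw1 : αw < 1)
    (hαn0 : 0 < αn) (hαn1 : αn < 1) (hlt : αw < αn)
    (n : ℕ) (w : Fin n → ℝ) (hw : ∀ i, 0 ≤ w i)
    (hW : 0 < ∑ i, w i)
    (s : ℝ) (hs : 0 < s)
    (t : Fin n → ℕ)
    (ht : ∀ i, w i * s + αw - 1 ≤ (t i : ℝ) ∧ (t i : ℝ) ≤ w i * s + αw)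
    (S : Finset (Fin n))
    (hSw : (∑ i ∈ S, w i) < αw * (∑ i, w i))
    (hSt : ((∑ i ∈ S, t i : ℕ) : ℝ) ≥ αn * ((∑ i, t i : ℕ) : ℝ)) :
    s < (αn * (1 - αw) * n) / ((αn - αw) * (∑ i, w i))
          - (S.card : ℝ) / (∑ i, w i) := by
  have hd : 0 < αn - αw := by linarith
  have h1 : ((∑ i ∈ S, t i : ℕ) : ℝ) ≤ (∑ i ∈ S, w i) * s + S.card * αw := by
    have h := Finset.sum_le_sum (fun i (_ : i ∈ S) => (ht i).2)
    rw [Finset.sum_add_distrib, ← Finset.sum_mul, Finset.sum_const, nsmul_eq_mul] at h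
    push_cast
    exact h
  have h2 : (∑ i ∈ Sᶜ, w i) * s + (Sᶜ.card : ℝ) * (αw - 1) ≤ ((∑ i ∈ Sᶜ, t i : ℕ) : ℝ) := by
    have h := Finset.sum_le_sum (fun i (_ : i ∈ Sᶜ) =>
      (show w i * s + (αw - 1) ≤ (t i : ℝ) by linarith [(ht i).1]))
    rw [Finset.sum_add_distrib, ← Finset.sum_mul, Finset.sum_const, nsmul_eq_mul] at h
    push_cast
    exact h
  have h3 : ((∑ i, t i : ℕ) : ℝ) = ((∑ i ∈ S, t i : ℕ) : ℝ) + ((∑ i ∈ Sᶜ, t i : ℕ) : ℝ) := by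
    rw [← Finset.sum_add_sum_compl S t, Nat.cast_add]
  have h4 := Finset.sum_add_sum_compl S w
  have h5 : (S.card : ℝ) + (Sᶜ.card : ℝ) = n := by
    have h := Finset.card_add_card_compl S
    rw [Fintype.card_fin] at h
    exact_mod_cast h
  rw [h3] at hSt
  generalize ((∑ i ∈ S, t i : ℕ) : ℝ) = a at *
  generalize ((∑ i ∈ Sᶜ, t i : ℕ) : ℝ) = b at *
  generalize (∑ i, w i) = W at *
  generalize (∑ i ∈ S, w i) = u at *
  generalize (∑ i ∈ Sᶜ, w i) = v at *
  generalize (S.card : ℝ) = k at *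
  generalize (Sᶜ.card : ℝ) = l at *
  subst h4
  rw [← h5]
  have e : (αn * (1 - αw) * (k + l)) / ((αn - αw) * (u + v)) - k / (u + v)
      = (αn * (1 - αw) * (k + l) - k * (αn - αw)) / ((αn - αw) * (u + v)) := by
    field_simp
  rw [e, lt_div_iff₀ (mul_pos hd hW)]
  have m1 := mul_le_mul_of_nonneg_left h1 (by linarith : 0 ≤ 1 - αn)
  have m2 := mul_le_mul_of_nonneg_left h2 hαn0.le
  have m3 := mul_lt_mul_of_pos_left hSw hs
  nlinarith
end

section
/- Let α_w, α_n ∈ (0,1) with α_w < α_n, let w : {1,…,n} → ℝ≥0 be weights with total weight W > 0, and let s > 0 be a real number. Define the ticket assignment t by t i = ⌊w i·s + α_w⌋ for each i, with total T = Σ_i t i. If T ≥ (α_w(1 − α_w)/(α_n − α_w)) · n, then t satisfies the Weight Restriction condition with parameters (α_w, α_n). -/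
/-- **Bootstrapping.** If the ticket assignment `t i = ⌊w i · s + αw⌋` has a
total number of tickets `T ≥ (αw (1 - αw)/(αn - αw)) * n`, then it satisfies
the Weight Restriction condition with parameters `(αw, αn)`. -/
theorem large_floor_assignment_is_valid
    (αw αn : ℝ) (hαw0 : 0 < αw) (hαw1 : αw < 1)
    (hαn0 : 0 < αn) (hαn1 : αn < 1) (hlt : αw < αn)
    (n : ℕ) (w : Fin n → ℝ) (hw : ∀ i, 0 ≤ w i)
    (hW : 0 < ∑ i, w i)
    (s : ℝ) (hs : 0 < s)
    (t : Fin n → ℕ) (ht : ∀ i, t i = ⌊w i * s + αw⌋₊)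
    (hT : ((∑ i, t i : ℕ) : ℝ) ≥ (αw * (1 - αw) / (αn - αw)) * n) :
    ∀ S : Finset (Fin n),
      (∑ i ∈ S, w i) < αw * (∑ i, w i) →
      ((∑ i ∈ S, t i : ℕ) : ℝ) < αn * ((∑ i, t i : ℕ) : ℝ) := by
  intro S hS
  have hup : ∀ i, (t i : ℝ) ≤ w i * s + αw := fun i => by
    rw [ht i]
    exact Nat.floor_le (by have := mul_nonneg (hw i) hs.le; linarith)
  have hlo : ∀ i, w i * s + αw - 1 ≤ (t i : ℝ) := fun i => by
    rw [ht i]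
    exact (Nat.sub_one_lt_floor _).le
  have h1 : ∑ i ∈ S, (t i : ℝ) ≤ (∑ i ∈ S, w i) * s + S.card * αw := by
    refine (Finset.sum_le_sum fun i _ => hup i).trans (le_of_eq ?_)
    rw [Finset.sum_add_distrib, Finset.sum_mul]; simp
  have h2 : (∑ i ∈ Sᶜ, w i) * s + Sᶜ.card * (αw - 1) ≤ ∑ i ∈ Sᶜ, (t i : ℝ) := by
    refine le_trans (le_of_eq ?_) (Finset.sum_le_sum fun i _ => hlo i)
    simp only [add_sub_assoc]
    rw [Finset.sum_add_distrib, Finset.sum_mul, Finset.sum_const, nsmul_eq_mul]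
  have h3 := Finset.sum_add_sum_compl S w
  have h4 := Finset.sum_add_sum_compl S (fun i => (t i : ℝ))
  have h5 : (S.card : ℝ) + Sᶜ.card = n := by
    have := Finset.card_add_card_compl S
    rw [Fintype.card_fin] at this
    exact_mod_cast this
  push_cast at hT ⊢
  have hd : 0 < αn - αw := by linarith
  have h6 : αw * (1 - αw) * n ≤ (αn - αw) * ∑ i, (t i : ℝ) := by
    have := mul_le_mul_of_nonneg_left hT hd.le
    refine le_trans (le_of_eq ?_) this
    field_simp
  have h7 := mul_lt_mul_of_pos_right hS hs
  rw [← h3] at h7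
  rw [← h5, ← h4] at h6
  rw [← h4]
  have h8 := mul_le_mul_of_nonneg_left h1 (by linarith : 0 ≤ 1 - αw)
  have h9 := mul_le_mul_of_nonneg_left h2 hαw0.le
  nlinarith
end

section
/- Let α_w, α_n ∈ (0,1) with α_w < α_n and let w : {1,…,n} → ℝ≥0 be weights with total weight W > 0. Then there exists a real number s > 0 such that the ticket assignment t defined by t i = ⌊w i·s + α_w⌋ satisfies the Weight Restriction condition with parameters (α_w, α_n). -/
/-- There exists a scale `s > 0` such that the ticket assignment
`t i = ⌊w i · s + αw⌋` satisfies the Weight Restriction condition with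
parameters `(αw, αn)`. -/
theorem exists_valid_scale
    (αw αn : ℝ) (hαw0 : 0 < αw) (hαw1 : αw < 1)
    (hαn0 : 0 < αn) (hαn1 : αn < 1) (hlt : αw < αn)
    (n : ℕ) (w : Fin n → ℝ) (hw : ∀ i, 0 ≤ w i)
    (hW : 0 < ∑ i, w i) :
    ∃ s : ℝ, 0 < s ∧
      ∀ S : Finset (Fin n),
        (∑ i ∈ S, w i) < αw * (∑ i, w i) →
        ((∑ i ∈ S, (⌊w i * s + αw⌋₊ : ℕ) : ℕ) : ℝ) <
          αn * ((∑ i, (⌊w i * s + αw⌋₊ : ℕ) : ℕ) : ℝ) := by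
  have hd : 0 < (αn - αw) * ∑ i, w i := mul_pos (by linarith) hW
  obtain ⟨s, hs0, hs⟩ : ∃ s : ℝ, 0 < s ∧ s * ((αn - αw) * ∑ i, w i) = 2 * n + 1 :=
    ⟨(2 * n + 1) / ((αn - αw) * ∑ i, w i), by positivity, div_mul_cancel₀ _ hd.ne'⟩
  refine ⟨s, hs0, fun S hS => ?_⟩
  push_cast
  have h1 : ∑ i ∈ S, (⌊w i * s + αw⌋₊ : ℝ) ≤ (∑ i ∈ S, w i) * s + n := by
    calc ∑ i ∈ S, (⌊w i * s + αw⌋₊ : ℝ) ≤ ∑ i ∈ S, (w i * s + 1) := by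
          refine Finset.sum_le_sum fun i _ => ?_
          have := Nat.floor_le (add_nonneg (mul_nonneg (hw i) hs0.le) hαw0.le)
          linarith
      _ = (∑ i ∈ S, w i) * s + S.card := by
          simp [Finset.sum_add_distrib, Finset.sum_mul]
      _ ≤ _ := by
          have : S.card ≤ n := by simpa using Finset.card_le_univ S
          have : (S.card : ℝ) ≤ n := by exact_mod_cast this
          linarith
  have h2 : (∑ i, w i) * s - n ≤ ∑ i, (⌊w i * s + αw⌋₊ : ℝ) := by
    calc (∑ i, w i) * s - n = ∑ i, (w i * s - 1) := by
          simp [Finset.sum_sub_distrib, Finset.sum_mul]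
      _ ≤ _ := by
          refine Finset.sum_le_sum fun i _ => ?_
          have := Nat.lt_floor_add_one (w i * s + αw)
          linarith
  have h3 := mul_lt_mul_of_pos_right hS hs0
  have h4 := mul_le_mul_of_nonneg_left h2 hαn0.le
  have h5 : αn * (n : ℝ) ≤ n := mul_le_of_le_one_left (Nat.cast_nonneg n) hαn1.le
  nlinarith
end

section
/- Let α, γ ∈ (0,1) with α < γ, let w : {1,…,n} → ℝ≥0 be weights with total weight W > 0, and let s > 0 be a real number. Define the ticket assignment t by t i = ⌊w i·s + γ⌋ for each i, with total T = Σ_i t i. If there exists a subset S₁ ⊆ {1,…,n} with w(S₁) < α·W and t(S₁) ≥ γ·T, then s < (γ(1 − γ)·n)/((γ − α)·W). -/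
/-- For the ticket assignment `t i = ⌊w i · s + γ⌋`: if some subset `S₁` with
`w(S₁) < α · W` gets at least `γ · T` tickets, then
`s < (γ (1 - γ) n) / ((γ - α) W)`. -/
theorem light_set_many_tickets_scale_bound
    (α γ : ℝ) (hα0 : 0 < α) (hα1 : α < 1)
    (hγ0 : 0 < γ) (hγ1 : γ < 1) (hlt : α < γ)
    (n : ℕ) (w : Fin n → ℝ) (hw : ∀ i, 0 ≤ w i)
    (hW : 0 < ∑ i, w i)
    (s : ℝ) (hs : 0 < s)
    (t : Fin n → ℕ) (ht : ∀ i, t i = ⌊w i * s + γ⌋₊)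
    (S₁ : Finset (Fin n))
    (hS₁w : (∑ i ∈ S₁, w i) < α * (∑ i, w i))
    (hS₁t : ((∑ i ∈ S₁, t i : ℕ) : ℝ) ≥ γ * ((∑ i, t i : ℕ) : ℝ)) :
    s < (γ * (1 - γ) * n) / ((γ - α) * (∑ i, w i)) := by
  have hup : ∀ i, (t i : ℝ) ≤ w i * s + γ := fun i => by
    rw [ht i]
    exact Nat.floor_le (by have := mul_nonneg (hw i) hs.le; linarith)
  have hlo : ∀ i, w i * s + γ - 1 ≤ (t i : ℝ) := fun i => by
    rw [ht i]
    exact (Nat.sub_one_lt_floor _).le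
  have h1 : ∑ i ∈ S₁, (t i : ℝ) ≤ (∑ i ∈ S₁, w i) * s + S₁.card * γ := by
    refine (Finset.sum_le_sum fun i _ => hup i).trans (le_of_eq ?_)
    rw [Finset.sum_add_distrib, Finset.sum_mul, Finset.sum_const, nsmul_eq_mul]
  have h2 : (∑ i ∈ S₁ᶜ, w i) * s + S₁ᶜ.card * (γ - 1) ≤ ∑ i ∈ S₁ᶜ, (t i : ℝ) := by
    refine le_trans (le_of_eq ?_) (Finset.sum_le_sum fun i _ => hlo i)
    simp only [add_sub_assoc]
    rw [Finset.sum_add_distrib, Finset.sum_mul, Finset.sum_const, nsmul_eq_mul]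
  have h3 := Finset.sum_add_sum_compl S₁ w
  have h4 := Finset.sum_add_sum_compl S₁ (fun i => (t i : ℝ))
  have h5 : (S₁.card : ℝ) + S₁ᶜ.card = n := by
    have := Finset.card_add_card_compl S₁
    rw [Fintype.card_fin] at this
    exact_mod_cast this
  push_cast at hS₁t
  rw [lt_div_iff₀ (mul_pos (by linarith) hW)]
  rw [← h4] at hS₁t
  have h6 := mul_le_mul_of_nonneg_left h1 (by linarith : 0 ≤ 1 - γ)
  have h7 := mul_le_mul_of_nonneg_left h2 hγ0.le
  have h8 := mul_lt_mul_of_pos_left hS₁w hs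
  rw [← h5]
  rw [← h3] at h8 ⊢
  linarith
end

section
/- Let β_w, β_n ∈ (0,1) with β_n < β_w, let w : {1,…,n} → ℝ≥0 be weights with total weight W > 0, let s > 0 be a real number, and let t : {1,…,n} → ℕ be a ticket assignment with total T such that w i·s + (1 − β_w) − 1 ≤ t i ≤ w i·s + (1 − β_w) for every i. If t violates the Weight Qualification condition with parameters (β_w, β_n), i.e., there exists a subset S ⊆ {1,…,n} with w(S) > β_w·W and t(S) ≤ β_n·T, then T < (β_w(1 − β_w)/(β_w − β_n)) · n. -/
/-- If a ticket assignment of the form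
`w i · s + (1 - βw) − 1 ≤ t i ≤ w i · s + (1 - βw)` violates the Weight
Qualification condition with parameters `(βw, βn)`, then its total number of
tickets is less than `(βw (1 - βw)/(βw - βn)) * n`. -/
theorem invalid_wq_assignment_few_tickets
    (βw βn : ℝ) (hβw0 : 0 < βw) (hβw1 : βw < 1)
    (hβn0 : 0 < βn) (hβn1 : βn < 1) (hlt : βn < βw)
    (n : ℕ) (w : Fin n → ℝ) (hw : ∀ i, 0 ≤ w i)
    (hW : 0 < ∑ i, w i)
    (s : ℝ) (hs : 0 < s)
    (t : Fin n → ℕ)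
    (ht : ∀ i, w i * s + (1 - βw) - 1 ≤ (t i : ℝ) ∧ (t i : ℝ) ≤ w i * s + (1 - βw))
    (S : Finset (Fin n))
    (hSw : (∑ i ∈ S, w i) > βw * (∑ i, w i))
    (hSt : ((∑ i ∈ S, t i : ℕ) : ℝ) ≤ βn * ((∑ i, t i : ℕ) : ℝ)) :
    ((∑ i, t i : ℕ) : ℝ) < (βw * (1 - βw) / (βw - βn)) * n := by
  have h1 : ∑ i ∈ S, (w i * s - βw) ≤ ∑ i ∈ S, (t i : ℝ) :=
    Finset.sum_le_sum fun i _ => by linarith [(ht i).1]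
  have h2 : ∑ i ∈ Sᶜ, (t i : ℝ) ≤ ∑ i ∈ Sᶜ, (w i * s + (1 - βw)) :=
    Finset.sum_le_sum fun i _ => (ht i).2
  have h3 := Finset.sum_add_sum_compl S (fun i => (t i : ℝ))
  have h4 := Finset.sum_add_sum_compl S w
  have h5 := Finset.sum_add_sum_compl S (fun _ => (1 : ℝ))
  simp only [Finset.sum_const, nsmul_eq_mul, mul_one, Finset.card_univ, Fintype.card_fin] at h5
  rw [Finset.sum_sub_distrib, ← Finset.sum_mul, Finset.sum_const, nsmul_eq_mul] at h1
  rw [Finset.sum_add_distrib, ← Finset.sum_mul, Finset.sum_const, nsmul_eq_mul] at h2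
  push_cast at hSt ⊢
  rw [← h4] at hSw
  rw [← h3] at hSt ⊢
  rw [← h5, div_mul_eq_mul_div, lt_div_iff₀ (by linarith)]
  have h6 := mul_le_mul_of_nonneg_left h1 (by linarith : 0 ≤ 1 - βw)
  have h7 := mul_le_mul_of_nonneg_left h2 hβw0.le
  have h8 := mul_lt_mul_of_pos_right hSw hs
  linarith
end
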